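/- For each nonzero integer n, each of the rational numbers 3/n, 1 − 2/n, 1 − 3/n, 1 − 4/n, 1 − 6/n, and 2 − 1/n is either an integer or a relation number. -/

import Mathlib

/-- `a = [[1,0],[1,1]]` as an element of `SL(2, ℂ)`. -/
def matA : Matrix.SpecialLinearGroup (Fin 2) ℂ :=
  ⟨!![1, 0; 1, 1], by simp [Matrix.det_fin_two_of]⟩

/-- `b_q = [[1,q],[0,1]]` as an element of `SL(2, ℂ)`. -/
def matB (q : ℂ) : Matrix.SpecialLinearGroup (Fin 2) ℂ :=
  ⟨!![1, q; 0, 1], by simp [Matrix.det_fin_two_of]⟩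

/-- `q` is a relation number: the homomorphism `F₂ → SL(2,ℂ)`, `x ↦ a`, `y ↦ b_q`,
is not injective. -/
def IsRelationNumber (q : ℂ) : Prop :=
  ¬ Function.Injective
    (FreeGroup.lift (fun i : Bool => if i then matA else matB q) :
      FreeGroup Bool →* Matrix.SpecialLinearGroup (Fin 2) ℂ)

/-- `q` is an `ℓ`-step relation number: there are `k ≤ ℓ` and nonzero integers
`m_1, …, m_{2k+1}` with `b_q^{m_1} a^{m_2} ⋯ b_q^{m_{2k+1}}` lower triangular. -/
def IsStepRelationNumber (ℓ : ℕ) (q : ℂ) : Prop :=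
  ∃ k : ℕ, k ≤ ℓ ∧ ∃ m : Fin (2 * k + 1) → ℤ, (∀ i, m i ≠ 0) ∧
    ((List.ofFn (fun i : Fin (2 * k + 1) =>
      (if (i : ℕ) % 2 = 0 then matB q else matA) ^ (m i))).prod).val 0 1 = 0

/-- The residue class `w + smℤ` is `s`-good with good representative `w`. -/
def IsGoodRep (s w m : ℤ) : Prop :=
  ∃ y : ℤ, y * (Int.gcd w (s * m) : ℤ) ∣ m * (Int.gcd w s : ℤ) ∧
    (w ∣ s * m * y + (Int.gcd w (s * m) : ℤ) ∨ w ∣ s * m * y - (Int.gcd w (s * m) : ℤ))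

theorem matA_zpow (m : ℤ) : ((matA ^ m : Matrix.SpecialLinearGroup (Fin 2) ℂ)).val = !![1, 0; (m : ℂ), 1] := by
  induction m using Int.induction_on with
  | zero => ext i j; fin_cases i <;> fin_cases j <;> simp
  | succ k ih =>
    rw [zpow_add_one, Matrix.SpecialLinearGroup.coe_mul, ih]
    ext i j; fin_cases i <;> fin_cases j <;> simp [matA]
  | pred k ih =>
    rw [zpow_sub_one, Matrix.SpecialLinearGroup.coe_mul, ih, Matrix.SpecialLinearGroup.coe_inv]
    ext i j; fin_cases i <;> fin_cases j <;> simp [matA, Matrix.adjugate_fin_two] ; ring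

theorem matB_zpow (q : ℂ) (m : ℤ) : ((matB q ^ m : Matrix.SpecialLinearGroup (Fin 2) ℂ)).val = !![1, (m : ℂ) * q; 0, 1] := by
  induction m using Int.induction_on with
  | zero => ext i j; fin_cases i <;> fin_cases j <;> simp
  | succ k ih =>
    rw [zpow_add_one, Matrix.SpecialLinearGroup.coe_mul, ih]
    ext i j; fin_cases i <;> fin_cases j <;> simp [matB] ; ring
  | pred k ih =>
    rw [zpow_sub_one, Matrix.SpecialLinearGroup.coe_mul, ih, Matrix.SpecialLinearGroup.coe_inv]
    ext i j; fin_cases i <;> fin_cases j <;> simp [matB, Matrix.adjugate_fin_two] ; ring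

/-- The homomorphism at parameter `q`. -/
def homQ (q : ℂ) : FreeGroup Bool →* Matrix.SpecialLinearGroup (Fin 2) ℂ :=
  FreeGroup.lift (fun i : Bool => if i then matA else matB q)

/-- Commutation of `W a W⁻¹` with `a` is vanishing of the upper right entry. -/
theorem comm_iff (W : Matrix.SpecialLinearGroup (Fin 2) ℂ) :
    W * matA * W⁻¹ * matA = matA * (W * matA * W⁻¹) ↔ W.val 0 1 = 0 := by
  have hd : W.val 0 0 * W.val 1 1 - W.val 0 1 * W.val 1 0 = 1 := by
    rw [← Matrix.det_fin_two]; exact W.2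
  have hA : (matA : Matrix.SpecialLinearGroup (Fin 2) ℂ).val = !![1, 0; 1, 1] := rfl
  constructor
  · intro h
    have h1 := congrArg (fun M : Matrix.SpecialLinearGroup (Fin 2) ℂ => M.val 0 0) h
    simp only [Matrix.SpecialLinearGroup.coe_mul, Matrix.SpecialLinearGroup.coe_inv, hA,
      Matrix.adjugate_fin_two] at h1
    simp [Matrix.mul_apply, Fin.sum_univ_two] at h1
    have h2 : W.val 0 1 ^ 2 = 0 := by linear_combination -h1
    exact pow_eq_zero_iff (two_ne_zero) |>.1 h2
  · intro h
    rw [h] at hd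
    apply Subtype.ext
    simp only [Matrix.SpecialLinearGroup.coe_mul, Matrix.SpecialLinearGroup.coe_inv, hA,
      Matrix.adjugate_fin_two]
    ext i j
    fin_cases i <;> fin_cases j <;>
      simp [Matrix.mul_apply, Fin.sum_univ_two, h] <;> ring

theorem key (w : FreeGroup Bool) (q Q : ℂ) (h : (homQ q w).val 0 1 = 0)
    (h' : (homQ Q w).val 0 1 ≠ 0) : IsRelationNumber q := by
  intro hinj
  have hA : ∀ r, homQ r (FreeGroup.of true) = matA := by intro r; simp [homQ]
  have e : w * FreeGroup.of true * w⁻¹ * FreeGroup.of true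
      = FreeGroup.of true * (w * FreeGroup.of true * w⁻¹) := by
    apply hinj
    change homQ q _ = homQ q _
    simp only [map_mul, map_inv, hA]
    exact (comm_iff _).2 h
  have e2 := congrArg (homQ Q) e
  simp only [map_mul, map_inv, hA] at e2
  exact h' ((comm_iff _).1 e2)

/-- Upper right entry of the word. -/
def ent (m1 m2 m3 m4 m5 m6 m7 q : ℂ) : ℂ :=
  let x1 := m7 * q
  let y1 := 1 + m6 * x1
  let x2 := x1 + m5 * q * y1
  let y2 := y1 + m4 * x2
  let x3 := x2 + m3 * q * y2
  let y3 := y2 + m2 * x3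
  x3 + m1 * q * y3

theorem key7 (m1 m2 m3 m4 m5 m6 m7 : ℤ) (q : ℂ) (h : ent m1 m2 m3 m4 m5 m6 m7 q = 0)
    (h' : ¬ ∀ Q, ent m1 m2 m3 m4 m5 m6 m7 Q = 0) : IsRelationNumber q := by
  push Not at h'
  obtain ⟨Q, hQ⟩ := h'
  have hw : ∀ r : ℂ, (homQ r (FreeGroup.of false ^ m1 * (FreeGroup.of true ^ m2 *
      (FreeGroup.of false ^ m3 * (FreeGroup.of true ^ m4 * (FreeGroup.of false ^ m5 *
      (FreeGroup.of true ^ m6 * FreeGroup.of false ^ m7))))))).val 0 1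
      = ent m1 m2 m3 m4 m5 m6 m7 r := by
    intro r
    have hA : homQ r (FreeGroup.of true) = matA := by simp [homQ]
    have hB : homQ r (FreeGroup.of false) = matB r := by simp [homQ]
    simp only [map_mul, map_zpow, hA, hB, Matrix.SpecialLinearGroup.coe_mul, matA_zpow, matB_zpow]
    simp [ent, Matrix.mul_apply, Fin.sum_univ_two]
    ring
  exact key _ q Q (by rw [hw]; exact h) (by rw [hw]; exact hQ)

theorem rel3 (m1 m2 m3 : ℤ) (q : ℂ) (h1 : m1 ≠ 0) (h2 : m2 ≠ 0) (h3 : m3 ≠ 0)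
    (h : (m1 : ℂ) + m3 + m1 * m2 * m3 * q = 0) : IsRelationNumber q := by
  apply key7 0 0 0 0 m1 m2 m3 q
  · simp only [ent]; push_cast; linear_combination q * h
  · intro H
    have e1 := H 1
    have e2 := H (-1)
    simp only [ent] at e1 e2
    have : (m1 : ℂ) * m2 * m3 = 0 := by push_cast at e1 e2; linear_combination (e1 + e2) / 2
    norm_cast at this
    simp_all

theorem rel5 (m1 m2 m3 m4 m5 : ℤ) (q : ℂ) (h1 : m1 ≠ 0) (h2 : m2 ≠ 0) (h3 : m3 ≠ 0)
    (h4 : m4 ≠ 0) (h5 : m5 ≠ 0)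
    (h : ent 0 0 m1 m2 m3 m4 m5 q = 0) : IsRelationNumber q := by
  apply key7 0 0 m1 m2 m3 m4 m5 q
  · push_cast; exact h
  · intro H
    have e1 := H 1
    have e2 := H (-1)
    have e3 := H 2
    have e4 := H (-2)
    simp only [ent] at e1 e2 e3 e4
    have : (m1 : ℂ) * m2 * m3 * m4 * m5 = 0 := by
      push_cast at e1 e2 e3 e4
      linear_combination (e3 - 2 * e1 + 2 * e2 - e4) / 12
    norm_cast at this
    simp_all

theorem rel7 (m1 m2 m3 m4 m5 m6 m7 : ℤ) (q : ℂ) (h1 : m1 ≠ 0) (h2 : m2 ≠ 0) (h3 : m3 ≠ 0)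
    (h4 : m4 ≠ 0) (h5 : m5 ≠ 0) (h6 : m6 ≠ 0) (h7 : m7 ≠ 0)
    (h : ent m1 m2 m3 m4 m5 m6 m7 q = 0) : IsRelationNumber q := by
  apply key7 m1 m2 m3 m4 m5 m6 m7 q h
  intro H
  have e1 := H 1
  have e2 := H (-1)
  have e3 := H 2
  have e4 := H (-2)
  simp only [ent] at e1 e2 e3 e4
  have : (m1 : ℂ) * m2 * m3 * m4 * m5 * m6 * m7 = 0 := by
    linear_combination (e3 - 4 * e1 - 4 * e2 + e4) / 24
  norm_cast at this
  simp_all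

theorem case3 (n : ℤ) (hn : n ≠ 0) :
    (∃ z : ℤ, (3 : ℚ) / n = z) ∨ IsRelationNumber (((3 : ℚ) / n : ℚ) : ℂ) := by
  have hc : (n : ℂ) ≠ 0 := by exact_mod_cast hn
  push_cast
  obtain ⟨k, hk | hk | hk⟩ : ∃ k : ℤ, n = 3 * k ∨ n = 3 * k + 1 ∨ n = 3 * k - 1 := by
    have : n % 3 = 0 ∨ n % 3 = 1 ∨ n % 3 = 2 := by omega
    rcases this with h | h | h
    · exact ⟨n / 3, by omega⟩
    · exact ⟨n / 3, by omega⟩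
    · exact ⟨n / 3 + 1, by omega⟩
  · right
    have hk0 : k ≠ 0 := by omega
    refine rel3 (2 * k) (-1) (2 * k) _ (by omega) (by omega) (by omega) ?_
    subst hk
    push_cast at *
    field_simp
    ring
  · by_cases hk0 : k = 0
    · left; exact ⟨3, by subst hk0; subst hk; norm_num⟩
    right
    refine rel3 k (-1) (-(k * n)) _ (by omega) (by omega) (by simp [hk0, hn]) ?_
    have : (n : ℂ) = 3 * k + 1 := by exact_mod_cast hk
    push_cast
    field_simp
    rw [this]; ring
  · by_cases hk0 : k = 0
    · left; exact ⟨-3, by subst hk0; subst hk; norm_num⟩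
    right
    refine rel3 k (-1) (k * n) _ (by omega) (by omega) (by simp [hk0, hn]) ?_
    have : (n : ℂ) = 3 * k - 1 := by exact_mod_cast hk
    push_cast
    field_simp
    rw [this]; ring

theorem case2 (n : ℤ) (hn : n ≠ 0) : IsRelationNumber (1 - 2 / (n : ℂ)) := by
  have hc : (n : ℂ) ≠ 0 := by exact_mod_cast hn
  refine rel5 1 (-1) (-n) (-1) 1 _ (by omega) (by omega) (by omega) (by omega) (by omega) ?_
  simp only [ent]
  push_cast
  field_simp
  ring

theorem case1 (n : ℤ) (hn : n ≠ 0) : IsRelationNumber (2 - 1 / (n : ℂ)) := by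
  have hc : (n : ℂ) ≠ 0 := by exact_mod_cast hn
  refine rel5 n 1 (-1) 1 n _ (by omega) (by omega) (by omega) (by omega) (by omega) ?_
  simp only [ent]
  push_cast
  field_simp
  ring

/-- Main family: `n = s M - e` with `e = ±1`. -/
theorem caseS (n s M e : ℤ) (hn : n ≠ 0) (hs : s ≠ 0) (he : e = 1 ∨ e = -1)
    (h : n + e = s * M) (hM : M ≠ 0) : IsRelationNumber (1 - (s : ℂ) / (n : ℂ)) := by
  have hc : (n : ℂ) ≠ 0 := by exact_mod_cast hn
  have hn' : (n : ℂ) = s * M - e := by rw [eq_sub_iff_add_eq]; exact_mod_cast h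
  have he2 : (e : ℂ) * e = 1 := by rcases he with rfl | rfl <;> norm_num
  by_cases hK : e * M + e = 0
  · -- then `n = - s - e`
    have hM1 : M = -1 := by rcases he with rfl | rfl <;> omega
    have := case1 (-n * e) (by rcases he with rfl | rfl <;> omega)
    convert this using 1
    subst hM1
    push_cast at hn' ⊢
    have hs' : (s : ℂ) = -n - e := by linear_combination hn'
    rw [hs']
    rcases he with rfl | rfl <;> push_cast <;> field_simp <;> ring
  · refine rel7 1 (-1) (-((e * M + e) * n)) (-M) (-1) 1 ((e * M + e) * n) _ (by omega) (by omega)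
      (by simp [hn, hK]) (by omega) (by omega) (by omega) (by simp [hn, hK]) ?_
    simp only [ent]
    push_cast
    field_simp
    rcases he with rfl | rfl <;> push_cast at hn' ⊢ <;> rw [hn'] <;> ring

theorem caseS' (n s : ℤ) (hn : n ≠ 0) (hs : 3 ≤ s)
    (h : s ∣ n + 1 ∨ s ∣ n - 1) :
    (∃ z : ℤ, 1 - (s : ℚ) / n = z) ∨ IsRelationNumber (1 - (s : ℂ) / (n : ℂ)) := by
  by_cases h1 : n = 1
  · left; exact ⟨1 - s, by subst h1; simp⟩
  by_cases h2 : n = -1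
  · left; exact ⟨1 + s, by subst h2; push_cast; ring⟩
  right
  rcases h with ⟨M, hM⟩ | ⟨M, hM⟩
  · exact caseS n s M 1 hn (by omega) (by simp) hM (by rintro rfl; omega)
  · exact caseS n s M (-1) hn (by omega) (by simp) (by omega) (by rintro rfl; omega)

theorem case3' (n : ℤ) (hn : n ≠ 0) :
    (∃ z : ℤ, 1 - (3 : ℚ) / n = z) ∨ IsRelationNumber (1 - 3 / (n : ℂ)) := by
  by_cases h : (3 : ℤ) ∣ n
  · right
    obtain ⟨k, rfl⟩ := h
    have hk : k ≠ 0 := by omega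
    have hc : (k : ℂ) ≠ 0 := by exact_mod_cast hk
    convert case2 (2 * k) (by omega) using 1
    push_cast
    field_simp
  · simpa using caseS' n 3 hn (by omega) (by omega)

theorem stmt16 (n : ℤ) (hn : n ≠ 0) :
    ((∃ z : ℤ, (3 : ℚ) / n = z) ∨ IsRelationNumber (((3 : ℚ) / n : ℚ) : ℂ)) ∧
    ((∃ z : ℤ, 1 - (2 : ℚ) / n = z) ∨ IsRelationNumber ((1 - (2 : ℚ) / n : ℚ) : ℂ)) ∧
    ((∃ z : ℤ, 1 - (3 : ℚ) / n = z) ∨ IsRelationNumber ((1 - (3 : ℚ) / n : ℚ) : ℂ)) ∧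
    ((∃ z : ℤ, 1 - (4 : ℚ) / n = z) ∨ IsRelationNumber ((1 - (4 : ℚ) / n : ℚ) : ℂ)) ∧
    ((∃ z : ℤ, 1 - (6 : ℚ) / n = z) ∨ IsRelationNumber ((1 - (6 : ℚ) / n : ℚ) : ℂ)) ∧
    ((∃ z : ℤ, 2 - (1 : ℚ) / n = z) ∨ IsRelationNumber ((2 - (1 : ℚ) / n : ℚ) : ℂ)) := by
  refine ⟨case3 n hn, Or.inr ?_, ?_, ?_, ?_, Or.inr ?_⟩
  · have := case2 n hn
    push_cast; exact this
  · push_cast; exact case3' n hn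
  · push_cast
    by_cases h : (2 : ℤ) ∣ n
    · right
      obtain ⟨k, rfl⟩ := h
      have hk : k ≠ 0 := by omega
      have hc : (k : ℂ) ≠ 0 := by exact_mod_cast hk
      convert case2 k hk using 1
      push_cast
      field_simp
      ring
    · simpa using caseS' n 4 hn (by omega) (by omega)
  · push_cast
    by_cases h : (2 : ℤ) ∣ n
    · obtain ⟨k, rfl⟩ := h
      have hk : k ≠ 0 := by omega
      have e1 : (1 : ℚ) - 6 / ((2 * k : ℤ) : ℚ) = 1 - 3 / (k : ℚ) := by
        have hc : (k : ℚ) ≠ 0 := by exact_mod_cast hk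
        push_cast; field_simp; ring
      have e2 : (1 : ℂ) - 6 / ((2 * k : ℤ) : ℂ) = 1 - 3 / (k : ℂ) := by
        have hc : (k : ℂ) ≠ 0 := by exact_mod_cast hk
        push_cast; field_simp; ring
      rw [e1, e2]
      exact case3' k hk
    by_cases h3 : (3 : ℤ) ∣ n
    · right
      obtain ⟨k, rfl⟩ := h3
      have hk : k ≠ 0 := by omega
      have hc : (k : ℂ) ≠ 0 := by exact_mod_cast hk
      convert case2 k hk using 1
      push_cast
      field_simp
      ring
    · have h6 : n % 6 = 1 ∨ n % 6 = 5 := by omega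
      simpa using caseS' n 6 hn (by omega) (by omega)
  · have := case1 n hn
    push_cast; exact this
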